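/- Let (X, d) be a proper, uniquely geodesic, straight metric space and b ∈ X. Then the horoboundary of X (the closure of h(X) in C(X, ℝ) minus h(X)) is connected if and only if D_b, the space of geodesic rays based at b with the topology of uniform convergence on compact sets, is connected. -/

import Mathlib

/-!
Let `G` be the space of bi-infinite geodesics `γ` with `γ 0 = b`. By Arzelà–Ascoli it is compact,
and by straightness restriction to `[0, ∞)` is a continuous bijection from `G` onto the Hausdorff
space `D_b`, hence a homeomorphism (`BiGeo.rayHomeomorph`). So `D_b` may be replaced by `G`.

Say that `γ ∈ G` is *directed* to `ξ` if `ξ (γ t) = -t` for every real `t`. The heart of the proof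
is that each `ξ` in the horoboundary has exactly one geodesic in `G` directed to it.

* Existence (`exists_directed_of_mem_horoboundary`): if `d(x, b) ≥ R` and `γ ∈ G` passes through
  `x`, then `h(x) (γ t) = -t` for all `t ≤ R`. Since `G` is compact, this relation survives limits,
  and a horoboundary point is a limit of such `h(x)` for every `R`.
* Uniqueness (`directed_unique`): if `γ` and `η` are directed to `ξ`, then for `s, t ≥ 0` the points
  `γ (-s)` and `η t` are at distance at least `ξ (γ (-s)) - ξ (η t) = s + t`, as `ξ` is
  `1`-Lipschitz. So following `γ` up to `b` and then `η` is a geodesic, and straightness gives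
  `γ = η`.

The resulting map from the horoboundary to `G` is continuous, because its graph is closed and `G` is
compact, and it is onto, because the points `h(γ n)` accumulate at a horofunction to which `γ` is
directed. Hence if the horoboundary is connected, so is `G`.

Conversely, the horoboundary is the intersection over `n` of the compact sets
`closure (h {x | d(x, b) ≥ n})`. If `G` is connected, then `{x | d(x, b) ≥ n}` is connected, being
the image of `G × [n, ∞)` under evaluation, and a decreasing intersection of compact connected sets
in a Hausdorff space is connected.
-/

open Filter Topology
open scoped NNReal ENNReal

variable {X : Type*} [MetricSpace X]

/-- `γ` restricted to the set `s ⊆ ℝ` is a (unit-speed) geodesic: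
`dist (γ u) (γ v) = |u - v|` for all `u, v ∈ s`. -/
def IsGeodesicOn (γ : ℝ → X) (s : Set ℝ) : Prop :=
  ∀ u ∈ s, ∀ v ∈ s, dist (γ u) (γ v) = |u - v|

/-- `X` is uniquely geodesic: any two distinct points are joined by a geodesic
parametrized on `[0, dist a c]`, and any two such geodesics agree on that interval. -/
def UniquelyGeodesic (X : Type*) [MetricSpace X] : Prop :=
  ∀ a c : X, a ≠ c →
    ∃ γ : ℝ → X,
      (IsGeodesicOn γ (Set.Icc 0 (dist a c)) ∧ γ 0 = a ∧ γ (dist a c) = c) ∧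
        ∀ γ' : ℝ → X,
          (IsGeodesicOn γ' (Set.Icc 0 (dist a c)) ∧ γ' 0 = a ∧ γ' (dist a c) = c) →
            Set.EqOn γ' γ (Set.Icc 0 (dist a c))

/-- `X` is straight: every geodesic defined on a nondegenerate closed interval extends to a
unique bi-infinite geodesic (an isometric embedding of `ℝ`). -/
def Straight (X : Type*) [MetricSpace X] : Prop :=
  ∀ (γ : ℝ → X) (a c : ℝ), a < c → IsGeodesicOn γ (Set.Icc a c) →
    ∃! γ' : ℝ → X, Isometry γ' ∧ Set.EqOn γ' γ (Set.Icc a c)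

/-- The space `D_b` of geodesic rays based at `b`, as a subspace of `C(ℝ≥0, X)`
(with the compact-open topology, i.e. uniform convergence on compact sets). -/
abbrev GeodesicRay (X : Type*) [MetricSpace X] (b : X) :=
  {γ : C(ℝ≥0, X) // Isometry ⇑γ ∧ γ 0 = b}

/-- The horofunction embedding `h : X → C(X, ℝ)`, `h x y = d(x, y) - d(x, b)`. -/
noncomputable def horo (b x : X) : C(X, ℝ) :=
  ⟨fun y => dist x y - dist x b,
    (continuous_const.dist continuous_id).sub continuous_const⟩

/-- The horoboundary of `X` (with basepoint `b`): the closure of `h(X)` in `C(X, ℝ)`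
minus `h(X)`. -/
def horoboundary (b : X) : Set C(X, ℝ) :=
  closure (Set.range (horo b)) \ Set.range (horo b)

/-- The setoid on `D_b × M` identifying all points whose second coordinate is `0`. -/
def collapseSetoid (X : Type*) [MetricSpace X] (b : X) (M : Type*) [Zero M] :
    Setoid (GeodesicRay X b × M) where
  r p q := p = q ∨ (p.2 = 0 ∧ q.2 = 0)
  iseqv := by
    refine ⟨fun _ => Or.inl rfl, ?_, ?_⟩
    · rintro p q (rfl | ⟨h1, h2⟩)
      · exact Or.inl rfl
      · exact Or.inr ⟨h2, h1⟩
    · rintro p q r (rfl | ⟨h1, h2⟩) (rfl | ⟨h3, h4⟩)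
      · exact Or.inl rfl
      · exact Or.inr ⟨h3, h4⟩
      · exact Or.inr ⟨h1, h2⟩
      · exact Or.inr ⟨h1, h4⟩

/-- The visual compactification `X̄_b = (D_b × [0, ∞]) / (D_b × {0})`. -/
abbrev VisualCompactification (X : Type*) [MetricSpace X] (b : X) :=
  Quotient (collapseSetoid X b ℝ≥0∞)

/-- `X` is C¹ along geodesics: for a bi-infinite geodesic `γ` and a point `p` off `γ`,
`t ↦ d(γ t, p)` is differentiable, and the derivative depends continuously on `(t, p)`. -/
def C1AlongGeodesics (X : Type*) [MetricSpace X] : Prop :=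
  ∀ γ : ℝ → X, Isometry γ →
    (∀ p, p ∉ Set.range γ → ∀ t : ℝ, DifferentiableAt ℝ (fun s => dist (γ s) p) t) ∧
      ContinuousOn (fun q : ℝ × X => deriv (fun s => dist (γ s) q.2) q.1)
        {q : ℝ × X | q.2 ∉ Set.range γ}

/-- `X` has constant distance variation: for distinct bi-infinite geodesics `γ, η` with
`γ 0 = η 0`, either `(d/dt) d(γ t, η s)|_{t=0}` exists for all `s > 0` and is independent
of `s`, or it exists for no `s > 0`. -/
def ConstantDistanceVariation (X : Type*) [MetricSpace X] : Prop :=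
  ∀ γ η : ℝ → X, Isometry γ → Isometry η → γ 0 = η 0 → γ ≠ η →
    ((∀ s : ℝ, 0 < s → DifferentiableAt ℝ (fun t => dist (γ t) (η s)) 0) ∧
        ∀ s s' : ℝ, 0 < s → 0 < s' →
          deriv (fun t => dist (γ t) (η s)) 0 = deriv (fun t => dist (γ t) (η s')) 0) ∨
      ∀ s : ℝ, 0 < s → ¬ DifferentiableAt ℝ (fun t => dist (γ t) (η s)) 0

/-! ### Bi-infinite geodesics through the basepoint -/

/-- The space of bi-infinite geodesics passing through `b` at time `0`, with the compact-open
topology. -/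
abbrev BiGeo (X : Type*) [MetricSpace X] (b : X) :=
  {γ : C(ℝ, X) // Isometry ⇑γ ∧ γ 0 = b}

/-- The bi-infinite geodesic `γ` is directed to the function `ξ` if `ξ` decreases at unit speed
along `γ`, normalized by `ξ (γ 0) = 0`. -/
def DirectedTo {b : X} (ξ : C(X, ℝ)) (γ : BiGeo X b) : Prop :=
  ∀ t : ℝ, ξ (γ.1 t) = -t

/-- Arzelà–Ascoli for pointed `1`-Lipschitz maps between metric spaces with proper target. -/
theorem isCompact_lipschitz_pointed {Y Z : Type*} [MetricSpace Y] [MetricSpace Z]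
    [ProperSpace Z] (y₀ : Y) (z₀ : Z) :
    IsCompact {f : C(Y, Z) | LipschitzWith 1 ⇑f ∧ f y₀ = z₀} := by
  apply ArzelaAscoli.isCompact_of_equicontinuous
  · have hK : IsCompact (Set.pi Set.univ fun y : Y => Metric.closedBall z₀ (dist y y₀)) :=
      isCompact_univ_pi fun y => isCompact_closedBall _ _
    have hC : IsClosed {f : Y → Z | LipschitzWith 1 f ∧ f y₀ = z₀} :=
      (isClosed_setOfPred_lipschitzWith 1).inter
        (isClosed_eq (continuous_apply y₀) continuous_const)
    convert hK.inter_left hC using 1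
    ext f
    constructor
    · rintro ⟨g, ⟨hg, hg0⟩, rfl⟩
      refine ⟨⟨hg, hg0⟩, fun y _ => ?_⟩
      have := hg.dist_le_mul y y₀
      rw [hg0] at this
      simpa using this
    · rintro ⟨⟨hf, hf0⟩, -⟩
      exact ⟨⟨f, hf.continuous⟩, ⟨hf, hf0⟩, rfl⟩
  · exact (LipschitzWith.uniformEquicontinuous _ 1 fun f => f.2.1).equicontinuous

theorem isPreconnected_iInter_of_antitone {Y : Type*} [TopologicalSpace Y] [T2Space Y]
    {K : ℕ → Set Y} (hanti : Antitone K) (hcomp : ∀ n, IsCompact (K n))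
    (hconn : ∀ n, IsPreconnected (K n)) : IsPreconnected (⋂ n, K n) := by
  have hI : IsClosed (⋂ n, K n) := isClosed_iInter fun n => (hcomp n).isClosed
  have hIc : IsCompact (⋂ n, K n) := (hcomp 0).of_isClosed_subset hI (Set.iInter_subset _ 0)
  rw [isPreconnected_closed_iff]
  intro s t hs ht hst hIs hIt
  by_contra hemp
  have hdisj : Disjoint ((⋂ n, K n) ∩ s) ((⋂ n, K n) ∩ t) := by
    rw [Set.disjoint_iff]
    rintro x ⟨⟨h1, h2⟩, -, h3⟩
    exact hemp ⟨x, h1, h2, h3⟩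
  obtain ⟨U, V, hU, hV, hsU, htV, hUV⟩ :=
    SeparatedNhds.of_isCompact_isCompact (hIc.inter_right hs) (hIc.inter_right ht) hdisj
  have hcover : ∀ x ∈ ⋂ n, K n, U ∪ V ∈ 𝓝 x := fun x hx =>
    (hU.union hV).mem_nhds ((hst hx).imp (fun h => hsU ⟨hx, h⟩) fun h => htV ⟨hx, h⟩)
  obtain ⟨n, hn⟩ := exists_subset_nhds_of_isCompact hanti.directed_ge hcomp hcover
  obtain ⟨x, hxI, hx⟩ := hIs
  obtain ⟨y, hyI, hy⟩ := hIt
  obtain ⟨z, -, hz⟩ := hconn n U V hU hV hn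
    ⟨x, Set.mem_iInter.1 hxI n, hsU ⟨hxI, hx⟩⟩ ⟨y, Set.mem_iInter.1 hyI n, htV ⟨hyI, hy⟩⟩
  exact Set.disjoint_left.1 hUV hz.1 hz.2

instance BiGeo.compactSpace [ProperSpace X] (b : X) : CompactSpace (BiGeo X b) := by
  refine (isCompact_iff_compactSpace (s := {γ : C(ℝ, X) | Isometry ⇑γ ∧ γ 0 = b})).1 ?_
  have hC : IsClosed {γ : C(ℝ, X) | ∀ s t : ℝ, dist (γ s) (γ t) = dist s t} := by
    simp only [Set.ofPred_forall]
    exact isClosed_iInter fun s => isClosed_iInter fun t => isClosed_eq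
      ((continuous_eval_const s).dist (continuous_eval_const t)) continuous_const
  convert (isCompact_lipschitz_pointed (0 : ℝ) b).inter_left hC using 1
  ext γ
  exact ⟨fun h => ⟨h.1.dist_eq, h.1.lipschitz, h.2⟩, fun h => ⟨Isometry.of_dist_eq h.1, h.2.2⟩⟩

theorem Isometry.isGeodesicOn {γ : ℝ → X} (hγ : Isometry γ) (s : Set ℝ) : IsGeodesicOn γ s :=
  fun u _ v _ => by rw [hγ.dist_eq, Real.dist_eq]

theorem Straight.eq_of_eqOn (hS : Straight X) {γ η : ℝ → X} (hγ : Isometry γ) (hη : Isometry η)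
    {a c : ℝ} (hac : a < c) (h : Set.EqOn γ η (Set.Icc a c)) : γ = η :=
  (hS η a c hac (hη.isGeodesicOn _)).unique ⟨hγ, h⟩ ⟨hη, fun _ _ => rfl⟩

theorem exists_biGeo_through (hU : UniquelyGeodesic X) (hS : Straight X) {b x : X} (hx : x ≠ b) :
    ∃ γ : BiGeo X b, γ.1 (dist x b) = x := by
  obtain ⟨γ, ⟨hγ, h0, h1⟩, -⟩ := hU b x hx.symm
  have hpos : 0 < dist b x := dist_pos.2 hx.symm
  obtain ⟨γ', ⟨hiso, heq⟩, -⟩ := hS γ 0 (dist b x) hpos hγ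
  have hx' : γ' (dist x b) = x := by
    rw [dist_comm]
    exact (heq ⟨hpos.le, le_rfl⟩).trans h1
  exact ⟨⟨⟨γ', hiso.continuous⟩, hiso, (heq ⟨le_rfl, hpos.le⟩).trans h0⟩, hx'⟩

theorem BiGeo.dist_base {b : X} (γ : BiGeo X b) (r : ℝ) : dist (γ.1 r) b = |r| := by
  have h := γ.2.1.dist_eq r 0
  rwa [γ.2.2, Real.dist_eq, sub_zero] at h

/-! ### Restricting bi-infinite geodesics to rays -/

/-- The restriction of a bi-infinite geodesic to `[0, ∞)`. -/
def BiGeo.toRay {b : X} (γ : BiGeo X b) : GeodesicRay X b :=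
  ⟨γ.1.comp ⟨fun t : ℝ≥0 => (t : ℝ), NNReal.continuous_coe⟩,
    γ.2.1.comp (Isometry.of_dist_eq fun _ _ => rfl), γ.2.2⟩

theorem BiGeo.toRay_bijective (hS : Straight X) (b : X) :
    Function.Bijective (BiGeo.toRay : BiGeo X b → GeodesicRay X b) := by
  constructor
  · intro γ η h
    have key : ∀ t : ℝ≥0, γ.1 (t : ℝ) = η.1 (t : ℝ) := fun t =>
      congrArg (fun ρ : GeodesicRay X b => ρ.1 t) h
    exact Subtype.ext (DFunLike.coe_injective (hS.eq_of_eqOn γ.2.1 η.2.1 zero_lt_one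
      fun t ht => key ⟨t, ht.1⟩))
  · intro ρ
    have hg : ∀ T : ℝ, IsGeodesicOn (fun t : ℝ => ρ.1 t.toNNReal) (Set.Icc 0 T) := by
      intro T u hu v hv
      rw [ρ.2.1.dist_eq, NNReal.dist_eq, Real.coe_toNNReal _ hu.1, Real.coe_toNNReal _ hv.1]
    obtain ⟨γ, ⟨hγ, hγeq⟩, -⟩ := hS _ 0 1 zero_lt_one (hg 1)
    -- Extending the ray from a longer interval gives the same geodesic, since both agree on `[0, 1]`.
    have hall : ∀ t : ℝ≥0, γ t = ρ.1 t := by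
      intro t
      have hpos : (0 : ℝ) < max 1 t := lt_max_of_lt_left one_pos
      obtain ⟨η, ⟨hη, hηeq⟩, -⟩ := hS _ 0 (max 1 t) hpos (hg _)
      have hγη : γ = η := hS.eq_of_eqOn hγ hη zero_lt_one fun s hs =>
        (hγeq hs).trans (hηeq ⟨hs.1, hs.2.trans (le_max_left _ _)⟩).symm
      have ht : η t = ρ.1 (t : ℝ).toNNReal := hηeq ⟨t.2, le_max_right _ _⟩
      rw [hγη, ht, Real.toNNReal_coe]
    refine ⟨⟨⟨γ, hγ.continuous⟩, hγ, ?_⟩, Subtype.ext (ContinuousMap.ext hall)⟩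
    exact (hall 0).trans ρ.2.2

/-- In a proper straight space, `D_b` is homeomorphic to the space of bi-infinite geodesics
through `b`. -/
noncomputable def BiGeo.rayHomeomorph [ProperSpace X] (hS : Straight X) (b : X) :
    BiGeo X b ≃ₜ GeodesicRay X b :=
  Continuous.homeoOfEquivCompactToT2 (f := Equiv.ofBijective _ (BiGeo.toRay_bijective hS b))
    (((ContinuousMap.continuous_precomp _).comp continuous_subtype_val).subtype_mk _)

/-! ### The closure of the image of the horofunction embedding -/

theorem horo_apply (b x y : X) : horo b x y = dist x y - dist x b := rfl

theorem horo_mem_lipschitz (b x : X) :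
    horo b x ∈ {f : C(X, ℝ) | LipschitzWith 1 ⇑f ∧ f b = 0} := by
  refine ⟨LipschitzWith.of_dist_le_mul fun y z => ?_, by simp [horo_apply]⟩
  rw [horo_apply, horo_apply, Real.dist_eq, NNReal.coe_one, one_mul, sub_sub_sub_cancel_right]
  simpa [dist_comm] using abs_dist_sub_le y z x

theorem closure_horo_subset (b : X) :
    closure (Set.range (horo b)) ⊆ {f : C(X, ℝ) | LipschitzWith 1 ⇑f ∧ f b = 0} :=
  closure_minimal (Set.range_subset_iff.2 (horo_mem_lipschitz b))
    (isCompact_lipschitz_pointed b (0 : ℝ)).isClosed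

theorem isCompact_closure_horo (b : X) : IsCompact (closure (Set.range (horo b))) :=
  (isCompact_lipschitz_pointed b (0 : ℝ)).of_isClosed_subset isClosed_closure
    (closure_horo_subset b)

theorem continuous_horo (b : X) : Continuous (horo b) := by
  apply ContinuousMap.continuous_of_continuous_uncurry
  change Continuous fun p : X × X => dist p.1 p.2 - dist p.1 b
  fun_prop

theorem horo_geodesic {b : X} (γ : BiGeo X b) {t r : ℝ} (hr : 0 ≤ r) (ht : t ≤ r) :
    horo b (γ.1 r) (γ.1 t) = -t := by
  rw [horo_apply, γ.dist_base, abs_of_nonneg hr, γ.2.1.dist_eq, Real.dist_eq, abs_of_nonneg (sub_nonneg.2 ht)]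
  ring

/-- The set of functions decreasing at unit speed, at the times in `s`, along some geodesic from a
closed family is closed: it is the projection of a closed set along the compact factor. -/
theorem isClosed_exists_geodesic [ProperSpace X] {b : X} {F : Set (BiGeo X b)} (hF : IsClosed F)
    (s : Set ℝ) : IsClosed {ξ : C(X, ℝ) | ∃ γ ∈ F, ∀ t ∈ s, ξ (γ.1 t) = -t} := by
  have hC : IsClosed {p : C(X, ℝ) × BiGeo X b | p.2 ∈ F ∧ ∀ t ∈ s, p.1 (p.2.1 t) = -t} := by
    refine (hF.preimage continuous_snd).inter ?_
    change IsClosed {p : C(X, ℝ) × BiGeo X b | ∀ t ∈ s, p.1 (p.2.1 t) = -t}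
    simp only [Set.ofPred_forall]
    refine isClosed_iInter fun t => isClosed_iInter fun _ => isClosed_eq ?_ continuous_const
    exact continuous_fst.eval
      ((continuous_eval_const t).comp (continuous_subtype_val.comp continuous_snd))
  convert isClosedMap_fst_of_compactSpace _ hC using 1
  ext ξ
  simp

/-- The closure of the image under `h` of the complement of the open ball of radius `n`. -/
def horoTail (b : X) (n : ℕ) : Set C(X, ℝ) :=
  closure (horo b '' {x | (n : ℝ) ≤ dist x b})

theorem horoTail_subset (b : X) (n : ℕ) : horoTail b n ⊆ closure (Set.range (horo b)) :=
  closure_mono (Set.image_subset_range _ _)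

theorem horoTail_antitone (b : X) : Antitone (horoTail b) := fun _ _ hmn =>
  closure_mono (Set.image_mono fun _ hx => le_trans (Nat.cast_le.2 hmn) (Set.mem_ofPred.1 hx))

theorem horoboundary_subset_horoTail [ProperSpace X] (b : X) (n : ℕ) :
    horoboundary b ⊆ horoTail b n := by
  rintro ξ ⟨hξ, hnot⟩
  have hsub : Set.range (horo b) ⊆
      horo b '' Metric.closedBall b n ∪ horo b '' {x | (n : ℝ) ≤ dist x b} := by
    rintro _ ⟨x, rfl⟩
    rcases le_total (dist x b) n with h | h
    · exact Or.inl ⟨x, h, rfl⟩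
    · exact Or.inr ⟨x, h, rfl⟩
  have := closure_mono hsub hξ
  rw [closure_union, ((isCompact_closedBall b (n : ℝ)).image (continuous_horo b)).isClosed.closure_eq]
    at this
  exact this.resolve_left fun h => hnot (Set.image_subset_range _ _ h)

/-! ### Geodesics directed to a horofunction -/

/-- Limits of `h(x)` as `x` leaves every ball admit a geodesic directed to them. -/
theorem exists_directed [ProperSpace X] (hU : UniquelyGeodesic X) (hS : Straight X) {b : X}
    {ξ : C(X, ℝ)} (hξ : ξ ∈ ⋂ n, horoTail b n) : ∃ γ : BiGeo X b, DirectedTo ξ γ := by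
  let K : ℕ → Set (BiGeo X b) := fun n => {γ | ∀ t ∈ Set.Iic ((n : ℝ) + 1), ξ (γ.1 t) = -t}
  have hclosed : ∀ n, IsClosed (K n) := by
    intro n
    simp only [K, Set.ofPred_forall]
    exact isClosed_iInter fun t => isClosed_iInter fun _ => isClosed_eq
      (ξ.continuous.comp ((continuous_eval_const t).comp continuous_subtype_val)) continuous_const
  have hne : ∀ n, (K n).Nonempty := by
    intro n
    have hmem : ξ ∈ {ξ : C(X, ℝ) | ∃ γ ∈ (Set.univ : Set (BiGeo X b)),
        ∀ t ∈ Set.Iic ((n : ℝ) + 1), ξ (γ.1 t) = -t} := by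
      refine closure_minimal ?_ (isClosed_exists_geodesic isClosed_univ _)
        (Set.mem_iInter.1 hξ (n + 1))
      rintro _ ⟨x, hx, rfl⟩
      have hx' : (n : ℝ) + 1 ≤ dist x b := by simpa using hx
      have hpos : 0 < dist x b := lt_of_lt_of_le (by positivity) hx'
      obtain ⟨γ, hγ⟩ := exists_biGeo_through hU hS (dist_pos.1 hpos)
      refine ⟨γ, trivial, fun t ht => ?_⟩
      have := horo_geodesic γ hpos.le (ht.trans hx')
      rwa [hγ] at this
    obtain ⟨γ, -, hγ⟩ := hmem
    exact ⟨γ, hγ⟩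
  obtain ⟨γ, hγ⟩ := IsCompact.nonempty_iInter_of_sequence_nonempty_isCompact_isClosed K
    (fun n γ hγ t ht => hγ t ((Set.mem_Iic.1 ht).trans (by push_cast; linarith))) hne
    (hclosed 0).isCompact hclosed
  refine ⟨γ, fun t => ?_⟩
  obtain ⟨n, hn⟩ := exists_nat_ge t
  exact Set.mem_iInter.1 hγ n t (hn.trans (by linarith))

theorem exists_directed_of_mem_horoboundary [ProperSpace X] (hU : UniquelyGeodesic X)
    (hS : Straight X) {b : X} {ξ : C(X, ℝ)} (hξ : ξ ∈ horoboundary b) :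
    ∃ γ : BiGeo X b, DirectedTo ξ γ :=
  exists_directed hU hS (Set.mem_iInter.2 fun n => horoboundary_subset_horoTail b n hξ)

/-- Following `γ` up to `b` and then `η` is a geodesic when both are directed to the same
`1`-Lipschitz function, so straightness forces `γ = η`. -/
theorem directed_unique (hS : Straight X) {b : X} {ξ : C(X, ℝ)} (hξ : LipschitzWith 1 ⇑ξ)
    {γ η : BiGeo X b} (hγ : DirectedTo ξ γ) (hη : DirectedTo ξ η) : γ = η := by
  let ζ : ℝ → X := fun t => if t ≤ 0 then γ.1 t else η.1 t
  have hmixed : ∀ s t : ℝ, s ≤ 0 → 0 < t → dist (γ.1 s) (η.1 t) = t - s := by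
    intro s t hs ht
    apply le_antisymm
    · have h := dist_triangle_right (γ.1 s) (η.1 t) b
      rw [γ.dist_base, η.dist_base, abs_of_nonpos hs, abs_of_pos ht] at h
      linarith
    · have h := hξ.dist_le_mul (γ.1 s) (η.1 t)
      rw [hγ s, hη t, Real.dist_eq, NNReal.coe_one, one_mul] at h
      have := (le_abs_self (-s - -t)).trans h
      linarith
  have hζ : Isometry ζ := by
    refine Isometry.of_dist_eq fun s t => ?_
    simp only [ζ]
    split_ifs with hs ht ht
    · exact γ.2.1.dist_eq s t
    · rw [hmixed s t hs (not_le.1 ht), Real.dist_eq, abs_sub_comm, abs_of_nonneg]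
      linarith
    · rw [dist_comm, hmixed t s ht (not_le.1 hs), Real.dist_eq, abs_of_nonneg]
      linarith
    · exact η.2.1.dist_eq s t
  have h1 : ζ = γ.1 := hS.eq_of_eqOn hζ γ.2.1 (show (-1 : ℝ) < 0 by norm_num)
    fun t ht => if_pos ht.2
  have h2 : ζ = η.1 := hS.eq_of_eqOn hζ η.2.1 (show (1 : ℝ) < 2 by norm_num)
    fun t ht => if_neg (not_le.2 (lt_of_lt_of_le one_pos ht.1))
  exact Subtype.ext (DFunLike.coe_injective (h1.symm.trans h2))

/-- A function with a geodesic directed to it is unbounded below, while `h(x) ≥ -d(x, b)`. -/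
theorem DirectedTo.notMem_range {b : X} {ξ : C(X, ℝ)} {γ : BiGeo X b} (hγ : DirectedTo ξ γ) :
    ξ ∉ Set.range (horo b) := by
  rintro ⟨x, rfl⟩
  have h := hγ (dist x b + 1)
  rw [horo_apply] at h
  have := dist_nonneg (x := x) (y := γ.1 (dist x b + 1))
  linarith

theorem horoboundary_eq_iInter [ProperSpace X] (hU : UniquelyGeodesic X) (hS : Straight X)
    (b : X) : horoboundary b = ⋂ n, horoTail b n := by
  refine Set.Subset.antisymm
    (Set.subset_iInter fun n => horoboundary_subset_horoTail b n) fun ξ hξ => ?_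
  obtain ⟨γ, hγ⟩ := exists_directed hU hS hξ
  exact ⟨horoTail_subset b 0 (Set.mem_iInter.1 hξ 0), hγ.notMem_range⟩

/-- Every geodesic through `b` is directed to some horoboundary point, namely any accumulation
point of the functions `h(γ n)`. -/
theorem exists_horoboundary_directed {b : X} (γ : BiGeo X b) :
    ∃ ξ ∈ horoboundary b, DirectedTo ξ γ := by
  let K : ℕ → Set C(X, ℝ) := fun n =>
    closure (Set.range (horo b)) ∩ {ξ | ∀ t ∈ Set.Iic (n : ℝ), ξ (γ.1 t) = -t}
  have hclosed : ∀ n, IsClosed (K n) := by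
    intro n
    refine isClosed_closure.inter ?_
    simp only [Set.ofPred_forall]
    exact isClosed_iInter fun t => isClosed_iInter fun _ => isClosed_eq
      (continuous_eval_const _) continuous_const
  have hne : ∀ n, (K n).Nonempty := fun n =>
    ⟨horo b (γ.1 n), subset_closure ⟨_, rfl⟩, fun t ht => horo_geodesic γ n.cast_nonneg ht⟩
  obtain ⟨ξ, hξ⟩ := IsCompact.nonempty_iInter_of_sequence_nonempty_isCompact_isClosed K
    (fun n ξ hξ => ⟨hξ.1, fun t ht => hξ.2 t ((Set.mem_Iic.1 ht).trans (by push_cast; linarith))⟩) hne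
    ((isCompact_closure_horo b).inter_right (by
      simp only [Set.ofPred_forall]
      exact isClosed_iInter fun t => isClosed_iInter fun _ => isClosed_eq
        (continuous_eval_const _) continuous_const)) hclosed
  have hdir : DirectedTo ξ γ := by
    intro t
    obtain ⟨n, hn⟩ := exists_nat_ge t
    exact (Set.mem_iInter.1 hξ n).2 t hn
  exact ⟨ξ, ⟨(Set.mem_iInter.1 hξ 0).1, hdir.notMem_range⟩, hdir⟩

/-! ### Transferring connectedness -/

/-- The map sending a horoboundary point to the geodesic directed to it is a continuous
surjection. -/
theorem connectedSpace_biGeo [ProperSpace X] (hU : UniquelyGeodesic X) (hS : Straight X) {b : X}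
    (h : IsConnected (horoboundary b)) : ConnectedSpace (BiGeo X b) := by
  choose p hp using fun ξ : horoboundary b => exists_directed_of_mem_horoboundary hU hS ξ.2
  have huniq : ∀ (ξ : horoboundary b) (γ : BiGeo X b), DirectedTo ξ.1 γ → p ξ = γ := fun ξ γ hγ =>
    directed_unique hS (closure_horo_subset b ξ.2.1).1 (hp ξ) hγ
  have hsurj : Function.Surjective p := by
    intro γ
    obtain ⟨ξ, hξ, hγ⟩ := exists_horoboundary_directed γ
    exact ⟨⟨ξ, hξ⟩, huniq _ _ hγ⟩
  have hcont : Continuous p := by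
    refine continuous_iff_isClosed.2 fun F hF => ?_
    convert (isClosed_exists_geodesic hF Set.univ).preimage
      (continuous_subtype_val : Continuous (Subtype.val : horoboundary b → C(X, ℝ))) using 1
    ext ξ
    constructor
    · exact fun hξ => ⟨p ξ, hξ, fun t _ => hp ξ t⟩
    · rintro ⟨γ, hγF, hγ⟩
      rw [Set.mem_preimage, huniq ξ γ fun t => hγ t trivial]
      exact hγF
  have := isConnected_iff_connectedSpace.1 h
  exact hsurj.connectedSpace hcont

theorem isPreconnected_horoTail (hU : UniquelyGeodesic X) (hS : Straight X) {b : X}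
    [ConnectedSpace (BiGeo X b)] (n : ℕ) : IsPreconnected (horoTail b n) := by
  have hset : {x : X | (n : ℝ) ≤ dist x b} =
      (fun p : BiGeo X b × ℝ => p.1.1 p.2) '' (Set.univ ×ˢ Set.Ici (n : ℝ)) := by
    ext x
    constructor
    · intro hx
      by_cases hxb : x = b
      · subst hxb
        obtain ⟨γ⟩ := (inferInstance : Nonempty (BiGeo X x))
        exact ⟨(γ, 0), ⟨trivial, by simpa using hx⟩, γ.2.2⟩
      · obtain ⟨γ, hγ⟩ := exists_biGeo_through hU hS hxb
        exact ⟨(γ, dist x b), ⟨trivial, hx⟩, hγ⟩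
    · rintro ⟨⟨γ, r⟩, ⟨-, hr⟩, rfl⟩
      change (n : ℝ) ≤ dist (γ.1 r) b
      rw [γ.dist_base]
      exact le_trans hr (le_abs_self r)
  refine IsPreconnected.closure (IsPreconnected.image ?_ _ (continuous_horo b).continuousOn)
  rw [hset]
  refine (isPreconnected_univ.prod isPreconnected_Ici).image _ (Continuous.continuousOn ?_)
  exact (continuous_subtype_val.comp continuous_fst).eval continuous_snd

theorem isConnected_horoboundary [ProperSpace X] (hU : UniquelyGeodesic X) (hS : Straight X)
    {b : X} [ConnectedSpace (BiGeo X b)] : IsConnected (horoboundary b) := by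
  obtain ⟨γ⟩ := (inferInstance : Nonempty (BiGeo X b))
  obtain ⟨ξ, hξ, -⟩ := exists_horoboundary_directed γ
  refine ⟨⟨ξ, hξ⟩, ?_⟩
  rw [horoboundary_eq_iInter hU hS b]
  exact isPreconnected_iInter_of_antitone (horoTail_antitone b)
    (fun n => (isCompact_closure_horo b).of_isClosed_subset isClosed_closure (horoTail_subset b n))
    (isPreconnected_horoTail hU hS)

/-- The horoboundary of a proper, uniquely geodesic, straight metric space is
connected if and only if the space `D_b` of geodesic rays based at `b` is connected. -/
theorem statement15 [ProperSpace X] (hU : UniquelyGeodesic X) (hS : Straight X) (b : X) :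
    IsConnected (horoboundary b) ↔ ConnectedSpace (GeodesicRay X b) := by
  let e := BiGeo.rayHomeomorph hS b
  constructor
  · intro h
    have := connectedSpace_biGeo hU hS h
    exact e.surjective.connectedSpace e.continuous
  · intro h
    have : ConnectedSpace (BiGeo X b) := e.symm.surjective.connectedSpace e.symm.continuous
    exact isConnected_horoboundary hU hS
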